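/- Let (S,𝔖,μ) and (T,𝔗,ν) be measure spaces over σ-rings. There exists a unique measure μ⊗ν on the product σ-ring 𝔖 ⊗ 𝔗 whose σ-finite component equals μ^σ ⊗ ν^σ, i.e., such that (i) (μ⊗ν)(A × B) = μ(A)·ν(B) for all A with μ(A) < ∞ and B with ν(B) < ∞, and (ii) the σ-ring of (μ⊗ν)-σ-finite sets is generated by rectangles A × B of sets of finite measure. -/

import Mathlib

open Set ENNReal

/-- A family of sets is a σ-ring if it contains `∅` and is closed under
set differences and countable unions. -/
def IsSigmaRing {α : Type*} (C : Set (Set α)) : Prop :=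
  ∅ ∈ C ∧ (∀ A B : Set α, A ∈ C → B ∈ C → A \ B ∈ C) ∧
    ∀ f : ℕ → Set α, (∀ n, f n ∈ C) → (⋃ n, f n) ∈ C

/-- The σ-ring generated by a family of sets. -/
def genSR {α : Type*} (D : Set (Set α)) : Set (Set α) :=
  ⋂₀ {C | IsSigmaRing C ∧ D ⊆ C}

/-- A measure on a σ-ring: countably additive, vanishing on `∅`. -/
def IsMeasure {α : Type*} (C : Set (Set α)) (μ : Set α → ℝ≥0∞) : Prop :=
  μ ∅ = 0 ∧ ∀ f : ℕ → Set α, (∀ n, f n ∈ C) →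
    Pairwise (Function.onFun Disjoint f) → μ (⋃ n, f n) = ∑' n, μ (f n)

/-- The family of μ-σ-finite sets: countable unions of sets of finite measure. -/
def sigmaFin {α : Type*} (C : Set (Set α)) (μ : Set α → ℝ≥0∞) : Set (Set α) :=
  {A | ∃ g : ℕ → Set α, (∀ n, g n ∈ C ∧ μ (g n) < ⊤) ∧ A = ⋃ n, g n}

/-- Restriction of a family of sets to a set `S`. -/
def restrictFam {α : Type*} (D : Set (Set α)) (S : Set α) : Set (Set α) :=
  (fun A => A ∩ S) '' D

/-- The product σ-ring, generated by measurable rectangles. -/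
def prodSR {α β : Type*} (S : Set (Set α)) (T : Set (Set β)) : Set (Set (α × β)) :=
  genSR {R | ∃ A ∈ S, ∃ B ∈ T, R = A ×ˢ B}

/-- The σ-algebra generated by a family of sets. -/
def genSA {α : Type*} (D : Set (Set α)) : MeasurableSpace α :=
  MeasurableSpace.generateFrom D

/-- The (extended) Lebesgue integral of a nonnegative function with respect to a
measure on a σ-ring, as the supremum of integrals of simple functions below it. -/
noncomputable def lintSR {α : Type*} (C : Set (Set α)) (μ : Set α → ℝ≥0∞)
    (f : α → ℝ≥0∞) : ℝ≥0∞ :=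
  ⨆ (n : ℕ) (c : Fin n → ℝ≥0∞) (A : Fin n → Set α) (_ : ∀ i, A i ∈ C)
    (_ : ∀ x, (∑ i, (A i).indicator (fun _ => c i) x) ≤ f x),
    ∑ i, c i * μ (A i)

/-- The positive part of an extended real, as an `ℝ≥0∞`. -/
noncomputable def epos (x : EReal) : ℝ≥0∞ := (x ⊔ 0).abs

/-- Measurability of an extended-real function with respect to a σ-ring:
measurable for the generated σ-algebra, with support in the σ-ring. -/
def SRMeasurableE {α : Type*} (C : Set (Set α)) (f : α → EReal) : Prop :=
  @Measurable α EReal (genSA C) _ f ∧ {x | f x ≠ 0} ∈ C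

/-- The Lebesgue integral of an extended-real function w.r.t. a measure on a σ-ring. -/
noncomputable def integralE {α : Type*} (C : Set (Set α)) (μ : Set α → ℝ≥0∞)
    (f : α → EReal) : EReal :=
  ((lintSR C μ fun x => epos (f x) : ℝ≥0∞) : EReal) -
    ((lintSR C μ fun x => epos (-f x) : ℝ≥0∞) : EReal)

/-- Integrability of an extended-real function w.r.t. a measure on a σ-ring. -/
def IntegrableE {α : Type*} (C : Set (Set α)) (μ : Set α → ℝ≥0∞)
    (f : α → EReal) : Prop :=
  SRMeasurableE C f ∧ lintSR C μ (fun x => (f x).abs) < ⊤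

/-- `lam` is the product of the measures `μ` and `ν` on σ-rings `S`, `T`:
the unique measure on the product σ-ring whose σ-finite component is the Halmos
product of the σ-finite components. -/
def IsProdMeasure {α β : Type*} (S : Set (Set α)) (T : Set (Set β))
    (μ : Set α → ℝ≥0∞) (ν : Set β → ℝ≥0∞) (lam : Set (α × β) → ℝ≥0∞) : Prop :=
  IsMeasure (prodSR S T) lam ∧
  (∀ A ∈ S, ∀ B ∈ T, μ A < ⊤ → ν B < ⊤ → lam (A ×ˢ B) = μ A * ν B) ∧
  sigmaFin (prodSR S T) lam =
    genSR {R | ∃ A ∈ S, ∃ B ∈ T, μ A < ⊤ ∧ ν B < ⊤ ∧ R = A ×ˢ B}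

open MeasureTheory

namespace IsSigmaRing

variable {α : Type*} {C : Set (Set α)}

theorem empty_mem (hC : IsSigmaRing C) : ∅ ∈ C := hC.1

theorem diff_mem (hC : IsSigmaRing C) {A B : Set α} (hA : A ∈ C) (hB : B ∈ C) : A \ B ∈ C :=
  hC.2.1 A B hA hB

theorem iUnion_mem (hC : IsSigmaRing C) {f : ℕ → Set α} (hf : ∀ n, f n ∈ C) : (⋃ n, f n) ∈ C :=
  hC.2.2 f hf

theorem inter_mem (hC : IsSigmaRing C) {A B : Set α} (hA : A ∈ C) (hB : B ∈ C) : A ∩ B ∈ C := by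
  rw [← Set.sdiff_sdiff_right_self]
  exact hC.diff_mem hA (hC.diff_mem hA hB)

theorem union_mem (hC : IsSigmaRing C) {A B : Set α} (hA : A ∈ C) (hB : B ∈ C) : A ∪ B ∈ C := by
  have h : A ∪ B = ⋃ n : ℕ, if n = 0 then A else B := by
    ext x
    simp only [mem_union, mem_iUnion]
    constructor
    · rintro (h | h)
      · exact ⟨0, by simpa using h⟩
      · exact ⟨1, by simpa using h⟩
    · rintro ⟨n, hn⟩
      split_ifs at hn
      · exact Or.inl hn
      · exact Or.inr hn
  rw [h]
  refine hC.iUnion_mem fun n => ?_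
  split_ifs
  exacts [hA, hB]

theorem disjointed_mem (hC : IsSigmaRing C) {f : ℕ → Set α} (hf : ∀ n, f n ∈ C) (n : ℕ) :
    disjointed f n ∈ C :=
  disjointedRec (p := (· ∈ C)) (fun _ i ht => hC.diff_mem ht (hf i)) (hf n)

end IsSigmaRing

section Generated

variable {α : Type*} {D C : Set (Set α)}

theorem isSigmaRing_genSR (D : Set (Set α)) : IsSigmaRing (genSR D) :=
  ⟨fun _ hC => hC.1.empty_mem,
    fun _ _ hA hB _ hC => hC.1.diff_mem (hA _ hC) (hB _ hC),
    fun _ hf _ hC => hC.1.iUnion_mem fun n => hf n _ hC⟩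

theorem subset_genSR (D : Set (Set α)) : D ⊆ genSR D :=
  fun _ hA _ hC => hC.2 hA

theorem genSR_subset (hC : IsSigmaRing C) (h : D ⊆ C) : genSR D ⊆ C :=
  fun _ hA => hA _ ⟨hC, h⟩

theorem exists_cover_of_mem_genSR (hD : D.Nonempty) {A : Set α} (hA : A ∈ genSR D) :
    ∃ g : ℕ → Set α, (∀ n, g n ∈ D) ∧ A ⊆ ⋃ n, g n := by
  obtain ⟨d, hd⟩ := hD
  refine genSR_subset (C := {A | ∃ g : ℕ → Set α, (∀ n, g n ∈ D) ∧ A ⊆ ⋃ n, g n})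
    ⟨⟨fun _ => d, fun _ => hd, empty_subset _⟩, ?_, ?_⟩ ?_ hA
  · rintro A B ⟨g, hg, hAg⟩ -
    exact ⟨g, hg, sdiff_subset.trans hAg⟩
  · intro f hf
    choose g hg hfg using hf
    refine ⟨fun n => g n.unpair.1 n.unpair.2, fun n => hg _ _, iUnion_subset fun n x hx => ?_⟩
    obtain ⟨m, hm⟩ := mem_iUnion.1 (hfg n hx)
    exact mem_iUnion.2 ⟨Nat.pair n m, by simpa using hm⟩
  · exact fun A hA => ⟨fun _ => A, fun _ => hA, subset_iUnion (fun _ : ℕ => A) 0⟩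

/-- If `D` absorbs intersections with a generating family of `genSR G`, then the σ-ring
generated by `D` absorbs intersections with every member of `genSR G`. -/
theorem inter_mem_genSR_of_absorbs {G : Set (Set α)} (h : ∀ A ∈ D, ∀ B ∈ G, A ∩ B ∈ D)
    {A B : Set α} (hA : A ∈ genSR D) (hB : B ∈ genSR G) : A ∩ B ∈ genSR D := by
  have hR := isSigmaRing_genSR D
  have hG : ∀ B ∈ G, ∀ A ∈ genSR D, A ∩ B ∈ genSR D := by
    intro B hB A hA
    refine genSR_subset (C := {A | A ∩ B ∈ genSR D}) ⟨?_, ?_, ?_⟩ ?_ hA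
    · simpa using hR.empty_mem
    · intro A₁ A₂ h₁ h₂
      have h : A₁ \ A₂ ∩ B = (A₁ ∩ B) \ (A₂ ∩ B) := by ext; simp; tauto
      rw [mem_ofPred_eq, h]
      exact hR.diff_mem h₁ h₂
    · intro f hf
      rw [mem_ofPred_eq, iUnion_inter]
      exact hR.iUnion_mem hf
    · exact fun A hA => subset_genSR D (h A hA B hB)
  refine genSR_subset (C := {B | ∀ A ∈ genSR D, A ∩ B ∈ genSR D}) ⟨?_, ?_, ?_⟩ hG hB A hA
  · intro A _
    simpa using hR.empty_mem
  · intro B₁ B₂ h₁ h₂ A hA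
    rw [inter_sdiff_distrib_left]
    exact hR.diff_mem (h₁ A hA) (h₂ A hA)
  · intro f hf A hA
    rw [inter_iUnion]
    exact hR.iUnion_mem fun n => hf n A hA

end Generated

section LocallyMeasurable

variable {α : Type*} {C : Set (Set α)}

/-- The σ-algebra of sets all of whose intersections with members of a σ-ring belong to it. -/
abbrev IsSigmaRing.locallyMeasurable (hC : IsSigmaRing C) : MeasurableSpace α where
  MeasurableSet' E := ∀ A ∈ C, E ∩ A ∈ C
  measurableSet_empty A _ := by simpa using hC.empty_mem
  measurableSet_compl E hE A hA := by
    have h : Eᶜ ∩ A = A \ (E ∩ A) := by ext; simp; tauto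
    rw [h]
    exact hC.diff_mem hA (hE A hA)
  measurableSet_iUnion f hf A hA := by
    rw [iUnion_inter]
    exact hC.iUnion_mem fun n => hf n A hA

theorem IsSigmaRing.measurableSet_of_mem (hC : IsSigmaRing C) {A : Set α} (hA : A ∈ C) :
    MeasurableSet[hC.locallyMeasurable] A :=
  fun _ hB => hC.inter_mem hA hB

/-- The measure `E ↦ μ (E ∩ A)` on locally measurable sets, for `A` in the σ-ring. -/
noncomputable def IsMeasure.restrictTo {μ : Set α → ℝ≥0∞} (hμ : IsMeasure C μ)
    (hC : IsSigmaRing C) {A : Set α} (hA : A ∈ C) : @Measure α hC.locallyMeasurable :=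
  @Measure.ofMeasurable α hC.locallyMeasurable (fun E _ => μ (E ∩ A))
    (by simpa using hμ.1)
    (by
      intro f hf hd
      rw [iUnion_inter]
      exact hμ.2 _ (fun n => hf n A hA)
        fun i j hij => (hd hij).mono inter_subset_left inter_subset_left)

variable {μ : Set α → ℝ≥0∞}

theorem IsMeasure.restrictTo_apply (hμ : IsMeasure C μ) (hC : IsSigmaRing C) {A : Set α}
    (hA : A ∈ C) {E : Set α} (hE : MeasurableSet[hC.locallyMeasurable] E) :
    hμ.restrictTo hC hA E = μ (E ∩ A) :=
  @Measure.ofMeasurable_apply α hC.locallyMeasurable _ _ _ E hE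

theorem IsMeasure.restrictTo_univ (hμ : IsMeasure C μ) (hC : IsSigmaRing C) {A : Set α}
    (hA : A ∈ C) : hμ.restrictTo hC hA univ = μ A := by
  rw [hμ.restrictTo_apply hC hA MeasurableSet.univ, univ_inter]

theorem IsMeasure.mono (hμ : IsMeasure C μ) (hC : IsSigmaRing C) {A B : Set α}
    (hA : A ∈ C) (hB : B ∈ C) (h : A ⊆ B) : μ A ≤ μ B := by
  have h' := measure_mono (μ := hμ.restrictTo hC hB) (subset_univ A)
  rwa [hμ.restrictTo_univ, hμ.restrictTo_apply hC hB (hC.measurableSet_of_mem hA),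
    inter_eq_left.2 h] at h'

theorem IsMeasure.union_lt_top (hμ : IsMeasure C μ) (hC : IsSigmaRing C) {A B : Set α}
    (hA : A ∈ C) (hB : B ∈ C) (hA' : μ A < ⊤) (hB' : μ B < ⊤) : μ (A ∪ B) < ⊤ := by
  have h := measure_union_le (μ := hμ.restrictTo hC (hC.union_mem hA hB)) A B
  rw [hμ.restrictTo_apply _ _ (hC.measurableSet_of_mem hA),
    hμ.restrictTo_apply _ _ (hC.measurableSet_of_mem hB),
    hμ.restrictTo_apply _ _ (hC.measurableSet_of_mem (hC.union_mem hA hB)), inter_self,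
    inter_eq_left.2 subset_union_left, inter_eq_left.2 subset_union_right] at h
  exact h.trans_lt (ENNReal.add_lt_top.2 ⟨hA', hB'⟩)

theorem IsMeasure.restrictTo_mono (hμ : IsMeasure C μ) (hC : IsSigmaRing C) {A B : Set α}
    (hA : A ∈ C) (hB : B ∈ C) (h : A ⊆ B) : hμ.restrictTo hC hA ≤ hμ.restrictTo hC hB := by
  refine Measure.le_iff.2 fun E hE => ?_
  rw [hμ.restrictTo_apply hC hA hE, hμ.restrictTo_apply hC hB hE]
  exact hμ.mono hC (hE A hA) (hE B hB) (inter_subset_inter_right _ h)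

end LocallyMeasurable

theorem isSigmaRing_measurableSet {α : Type*} (m : MeasurableSpace α) :
    IsSigmaRing {A | MeasurableSet[m] A} := by
  simp only [IsSigmaRing, mem_ofPred_eq]
  exact ⟨MeasurableSet.empty, fun _ _ h₁ h₂ => h₁.diff h₂, fun _ hf => MeasurableSet.iUnion hf⟩

section Uniqueness

variable {α : Type*} {G : Set (Set α)} {μ ν : Set α → ℝ≥0∞}

/-- Two measures on `genSR G` that agree on the traces of a π-system `G` on a set `Q` of finite
measure agree on the traces of all of `genSR G` on `Q`. -/
theorem IsMeasure.eq_inter_of_eq_generators (hμ : IsMeasure (genSR G) μ)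
    (hν : IsMeasure (genSR G) ν) (hG : IsPiSystem G) {Q : Set α} (hQ : Q ∈ G) (hQμ : μ Q < ⊤)
    (h : ∀ E ∈ G, μ (E ∩ Q) = ν (E ∩ Q)) {E : Set α} (hE : E ∈ genSR G) :
    μ (E ∩ Q) = ν (E ∩ Q) := by
  have hC := isSigmaRing_genSR G
  have hQC := subset_genSR G hQ
  have hle : MeasurableSpace.generateFrom G ≤ hC.locallyMeasurable :=
    MeasurableSpace.generateFrom_le fun A hA => hC.measurableSet_of_mem (subset_genSR G hA)
  have hsub : ∀ A ∈ genSR G, MeasurableSet[MeasurableSpace.generateFrom G] A :=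
    genSR_subset (C := {A | MeasurableSet[MeasurableSpace.generateFrom G] A})
      (isSigmaRing_measurableSet _)
      fun A hA => MeasurableSpace.measurableSet_generateFrom hA
  have heq : (hμ.restrictTo hC hQC).trim hle = (hν.restrictTo hC hQC).trim hle := by
    have : IsFiniteMeasure ((hμ.restrictTo hC hQC).trim hle) :=
      ⟨by rwa [trim_measurableSet_eq hle MeasurableSet.univ, hμ.restrictTo_univ]⟩
    refine @ext_of_generate_finite α (MeasurableSpace.generateFrom G) _ _ G rfl hG this ?_ ?_
    · intro A hA
      have hAC := subset_genSR G hA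
      rw [trim_measurableSet_eq hle (hsub A hAC), trim_measurableSet_eq hle (hsub A hAC),
        hμ.restrictTo_apply _ _ (hC.measurableSet_of_mem hAC),
        hν.restrictTo_apply _ _ (hC.measurableSet_of_mem hAC), h A hA]
    · rw [trim_measurableSet_eq hle MeasurableSet.univ, trim_measurableSet_eq hle MeasurableSet.univ,
        hμ.restrictTo_univ, hν.restrictTo_univ]
      simpa using h Q hQ
  rw [← hμ.restrictTo_apply hC hQC (hC.measurableSet_of_mem hE),
    ← hν.restrictTo_apply hC hQC (hC.measurableSet_of_mem hE),
    ← trim_measurableSet_eq hle (hsub E hE), ← trim_measurableSet_eq hle (hsub E hE), heq]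

/-- Measures whose traces agree on each member of a countable cover of `E` agree on `E`. -/
theorem IsMeasure.eq_of_eq_inter_cover {C : Set (Set α)} (hC : IsSigmaRing C)
    (hμ : IsMeasure C μ) (hν : IsMeasure C ν) {Q : ℕ → Set α} (hQ : ∀ n, Q n ∈ C)
    (h : ∀ n, ∀ E ∈ C, μ (E ∩ Q n) = ν (E ∩ Q n)) {E : Set α} (hE : E ∈ C)
    (hEQ : E ⊆ ⋃ n, Q n) : μ E = ν E := by
  have hEu : E = ⋃ n, E ∩ disjointed Q n := by
    rw [← inter_iUnion, iUnion_disjointed, inter_eq_left.2 hEQ]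
  have hmem : ∀ n, E ∩ disjointed Q n ∈ C := fun n => hC.inter_mem hE (hC.disjointed_mem hQ n)
  have hd : Pairwise (Function.onFun Disjoint fun n => E ∩ disjointed Q n) := fun i j hij =>
    (disjoint_disjointed Q hij).mono inter_subset_right inter_subset_right
  rw [hEu, hμ.2 _ hmem hd, hν.2 _ hmem hd]
  refine tsum_congr fun n => ?_
  have h' := h n _ (hmem n)
  rwa [inter_assoc, inter_eq_left.2 (disjointed_subset Q n)] at h'

end Uniqueness

section Supremum

variable {α ι : Type*} {C : Set (Set α)}

/-- The pointwise supremum of an upwards directed family of measures is a measure. -/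
theorem IsMeasure.iSup_of_directed {m : ι → Set α → ℝ≥0∞}
    (hm : ∀ i, IsMeasure C (m i))
    (hd : ∀ i j, ∃ k, ∀ A ∈ C, m i A ≤ m k A ∧ m j A ≤ m k A) :
    IsMeasure C fun A => ⨆ i, m i A := by
  refine ⟨by simp [(hm _).1], fun f hf hdisj => ?_⟩
  have h : ∀ s : Finset ℕ, ∑ n ∈ s, ⨆ i, m i (f n) = ⨆ i, ∑ n ∈ s, m i (f n) := fun s =>
    ENNReal.finsetSum_iSup fun i j => (hd i j).imp fun k hk n => hk (f n) (hf n)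
  simp_rw [(hm _).2 f hf hdisj, ENNReal.tsum_eq_iSup_sum, h]
  exact iSup_comm

end Supremum

section Product

variable {α β : Type*} {S : Set (Set α)} {T : Set (Set β)} {μ : Set α → ℝ≥0∞} {ν : Set β → ℝ≥0∞}

theorem isPiSystem_rectangles (hS : IsSigmaRing S) (hT : IsSigmaRing T) :
    IsPiSystem {R : Set (α × β) | ∃ A ∈ S, ∃ B ∈ T, R = A ×ˢ B} := by
  rintro _ ⟨A, hA, B, hB, rfl⟩ _ ⟨A', hA', B', hB', rfl⟩ -
  exact ⟨_, hS.inter_mem hA hA', _, hT.inter_mem hB hB', prod_inter_prod⟩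

theorem measurableSet_of_mem_prodSR (hS : IsSigmaRing S) (hT : IsSigmaRing T) {E : Set (α × β)}
    (hE : E ∈ prodSR S T) :
    MeasurableSet[hS.locallyMeasurable.prod hT.locallyMeasurable] E := by
  let _ := hS.locallyMeasurable
  let _ := hT.locallyMeasurable
  refine genSR_subset (isSigmaRing_measurableSet _) ?_ hE
  rintro _ ⟨A, hA, B, hB, rfl⟩
  exact (hS.measurableSet_of_mem hA).prod (hT.measurableSet_of_mem hB)

/-- There is a measure on the product σ-ring with the expected values on rectangles with sides of
finite measure. -/
theorem exists_isMeasure_prodSR (hS : IsSigmaRing S) (hT : IsSigmaRing T)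
    (hμ : IsMeasure S μ) (hν : IsMeasure T ν) :
    ∃ ρ : Set (α × β) → ℝ≥0∞, IsMeasure (prodSR S T) ρ ∧
      ∀ A ∈ S, ∀ B ∈ T, μ A < ⊤ → ν B < ⊤ → ρ (A ×ˢ B) = μ A * ν B := by
  let _ := hS.locallyMeasurable
  let _ := hT.locallyMeasurable
  let ι := {A : Set α // A ∈ S ∧ μ A < ⊤} × {B : Set β // B ∈ T ∧ ν B < ⊤}
  let m : ι → Measure (α × β) := fun i =>
    (hμ.restrictTo hS i.1.2.1).prod (hν.restrictTo hT i.2.2.1)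
  have hfin : ∀ i : ι, IsFiniteMeasure (hν.restrictTo hT i.2.2.1) := fun i =>
    ⟨by rw [hν.restrictTo_univ]; exact i.2.2.2⟩
  have hm : ∀ (i : ι) (A : Set α) (B : Set β), A ∈ S → B ∈ T →
      m i (A ×ˢ B) = μ (A ∩ i.1) * ν (B ∩ i.2) := by
    intro i A B hA hB
    have := hfin i
    rw [Measure.prod_prod, hμ.restrictTo_apply hS _ (hS.measurableSet_of_mem hA),
      hν.restrictTo_apply hT _ (hT.measurableSet_of_mem hB)]
  refine ⟨fun E => ⨆ i, m i E, IsMeasure.iSup_of_directed ?_ ?_, ?_⟩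
  · exact fun i => ⟨measure_empty, fun f hf hd =>
      measure_iUnion hd fun n => measurableSet_of_mem_prodSR hS hT (hf n)⟩
  · rintro ⟨⟨A, hA, hA'⟩, ⟨B, hB, hB'⟩⟩ ⟨⟨A₂, hA₂, hA₂'⟩, ⟨B₂, hB₂, hB₂'⟩⟩
    let k : ι := ⟨⟨A ∪ A₂, hS.union_mem hA hA₂, hμ.union_lt_top hS hA hA₂ hA' hA₂'⟩,
      ⟨B ∪ B₂, hT.union_mem hB hB₂, hν.union_lt_top hT hB hB₂ hB' hB₂'⟩⟩
    have := hfin k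
    exact ⟨k, fun E _ =>
      ⟨Measure.prod_mono (hμ.restrictTo_mono hS _ _ subset_union_left)
        (hν.restrictTo_mono hT _ _ subset_union_left) E,
      Measure.prod_mono (hμ.restrictTo_mono hS _ _ subset_union_right)
        (hν.restrictTo_mono hT _ _ subset_union_right) E⟩⟩
  · intro A hA B hB hA' hB'
    refine le_antisymm (iSup_le fun i => ?_) ?_
    · rw [hm i A B hA hB]
      exact mul_le_mul' (hμ.mono hS (hS.inter_mem hA i.1.2.1) hA inter_subset_left)
        (hν.mono hT (hT.inter_mem hB i.2.2.1) hB inter_subset_left)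
    · refine le_iSup_of_le (⟨⟨A, hA, hA'⟩, ⟨B, hB, hB'⟩⟩ : ι) ?_
      rw [hm _ A B hA hB, inter_self, inter_self]

end Product

open Classical in
/-- A measure on a σ-ring, made infinite outside an absorbing sub-σ-ring, is a measure. -/
theorem IsMeasure.extend_top {α : Type*} {C D : Set (Set α)} {μ : Set α → ℝ≥0∞}
    (hμ : IsMeasure C μ) (hD : IsSigmaRing D) (hDC : ∀ A ∈ D, ∀ B ∈ C, A ∩ B ∈ D) :
    IsMeasure C fun A => if A ∈ D then μ A else ⊤ := by
  refine ⟨by simp [hD.empty_mem, hμ.1], fun f hf hd => ?_⟩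
  by_cases h : ∀ n, f n ∈ D
  · simp only [h, hD.iUnion_mem h, if_true]
    exact hμ.2 f hf hd
  · obtain ⟨n, hn⟩ := not_forall.1 h
    have hU : (⋃ n, f n) ∉ D := fun hU => hn <| by
      have h' := hDC _ hU _ (hf n)
      rwa [inter_eq_right.2 (subset_iUnion f n)] at h'
    simp only [hU, if_false]
    exact (ENNReal.tsum_eq_top_of_eq_top ⟨n, by simp [hn]⟩).symm

/-- existence and uniqueness of the product of arbitrary measures
on σ-rings, characterized by its value on rectangles of finite-measure sets and
by its σ-ring of σ-finite sets. -/
theorem stmt_9 {α β : Type*} (S : Set (Set α)) (T : Set (Set β))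
    (μ : Set α → ℝ≥0∞) (ν : Set β → ℝ≥0∞)
    (hS : IsSigmaRing S) (hT : IsSigmaRing T)
    (hμ : IsMeasure S μ) (hν : IsMeasure T ν) :
    ∃ lam : Set (α × β) → ℝ≥0∞, IsProdMeasure S T μ ν lam ∧
      ∀ lam' : Set (α × β) → ℝ≥0∞, IsProdMeasure S T μ ν lam' →
        ∀ C ∈ prodSR S T, lam' C = lam C := by
  classical
  set G : Set (Set (α × β)) := {R | ∃ A ∈ S, ∃ B ∈ T, R = A ×ˢ B}
  set F : Set (Set (α × β)) := {R | ∃ A ∈ S, ∃ B ∈ T, μ A < ⊤ ∧ ν B < ⊤ ∧ R = A ×ˢ B}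
  have hP : IsSigmaRing (prodSR S T) := isSigmaRing_genSR G
  have hR : IsSigmaRing (genSR F) := isSigmaRing_genSR F
  have hFG : F ⊆ G := by
    rintro _ ⟨A, hA, B, hB, -, -, rfl⟩
    exact ⟨A, hA, B, hB, rfl⟩
  have hFP : F ⊆ prodSR S T := hFG.trans (subset_genSR G)
  have hRP : genSR F ⊆ prodSR S T := genSR_subset hP hFP
  have hFne : F.Nonempty := ⟨∅, ∅, hS.empty_mem, ∅, hT.empty_mem, by simp [hμ.1], by simp [hν.1],
    by simp⟩
  have hFabs : ∀ A ∈ F, ∀ B ∈ G, A ∩ B ∈ F := by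
    rintro _ ⟨A, hA, B, hB, hA', hB', rfl⟩ _ ⟨A₂, hA₂, B₂, hB₂, rfl⟩
    exact ⟨_, hS.inter_mem hA hA₂, _, hT.inter_mem hB hB₂,
      (hμ.mono hS (hS.inter_mem hA hA₂) hA inter_subset_left).trans_lt hA',
      (hν.mono hT (hT.inter_mem hB hB₂) hB inter_subset_left).trans_lt hB', prod_inter_prod⟩
  have hRabs : ∀ A ∈ genSR F, ∀ B ∈ prodSR S T, A ∩ B ∈ genSR F := fun A hA B hB =>
    inter_mem_genSR_of_absorbs hFabs hA hB
  obtain ⟨ρ, hρ, hρF⟩ := exists_isMeasure_prodSR hS hT hμ hν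
  have hlam := hρ.extend_top hR hRabs
  set lam : Set (α × β) → ℝ≥0∞ := fun A => if A ∈ genSR F then ρ A else ⊤ with hlam_def
  have hlamF : ∀ A ∈ S, ∀ B ∈ T, μ A < ⊤ → ν B < ⊤ → lam (A ×ˢ B) = μ A * ν B := by
    intro A hA B hB hA' hB'
    have hmem : A ×ˢ B ∈ genSR F := subset_genSR F ⟨A, hA, B, hB, hA', hB', rfl⟩
    simp only [hlam_def, hmem, if_true, hρF A hA B hB hA' hB']
  have hlam_lt : ∀ Q ∈ F, lam Q < ⊤ := by
    rintro _ ⟨A, hA, B, hB, hA', hB', rfl⟩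
    rw [hlamF A hA B hB hA' hB']
    exact ENNReal.mul_lt_top hA' hB'
  have hσ : sigmaFin (prodSR S T) lam = genSR F := by
    refine Subset.antisymm ?_ fun E hE => ?_
    · rintro _ ⟨g, hg, rfl⟩
      refine hR.iUnion_mem fun n => ?_
      by_contra h
      exact absurd (hg n).2 (by simp [hlam_def, h])
    · obtain ⟨g, hg, hEg⟩ := exists_cover_of_mem_genSR hFne hE
      refine ⟨fun n => E ∩ g n, fun n => ?_, ?_⟩
      · have hmem := hP.inter_mem (hRP hE) (hFP (hg n))
        exact ⟨hmem, (hlam.mono hP hmem (hFP (hg n)) inter_subset_right).trans_lt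
          (hlam_lt _ (hg n))⟩
      · rw [← inter_iUnion, inter_eq_left.2 hEg]
  refine ⟨lam, ⟨hlam, hlamF, hσ⟩, fun lam' ⟨hm, hmF, hmσ⟩ E hE => ?_⟩
  have hFeq : ∀ Q ∈ F, lam' Q = lam Q := by
    rintro _ ⟨A, hA, B, hB, hA', hB', rfl⟩
    rw [hmF A hA B hB hA' hB', hlamF A hA B hB hA' hB']
  by_cases hER : E ∈ genSR F
  · obtain ⟨g, hg, hEg⟩ := exists_cover_of_mem_genSR hFne hER
    refine hm.eq_of_eq_inter_cover hP hlam (fun n => hFP (hg n)) (fun n E hE => ?_) hE hEg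
    refine hm.eq_inter_of_eq_generators hlam (isPiSystem_rectangles hS hT) (hFG (hg n)) ?_ ?_ hE
    · rw [hFeq _ (hg n)]
      exact hlam_lt _ (hg n)
    · intro E hE
      rw [inter_comm]
      exact hFeq _ (hFabs _ (hg n) _ hE)
  · have h : lam' E = ⊤ := by
      by_contra h
      refine hER (hmσ ▸ ⟨fun _ => E, fun _ => ⟨hE, lt_top_iff_ne_top.2 h⟩, ?_⟩)
      exact (iUnion_const E).symm
    rw [h, hlam_def]
    exact (if_neg hER).symm
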